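/- LP-rounding gives a factor-4 guarantee for the discrete guarding problem with disjoint guard and point sets: let f : ℝ → ℝ be a terrain, G ⊆ ℝ a finite set of guards with nonnegative weights w : G → ℝ, and N ⊆ ℝ a finite set of points with G ∩ N = ∅. Suppose x : G → ℝ is nonnegative and for every p ∈ N, Σ_{g ∈ G, g sees p} x(g) ≥ 1. Then there exists A ⊆ G such that every p ∈ N is seen by some g ∈ A and Σ_{g ∈ A} w(g) ≤ 4·Σ_{g ∈ G} w(g)·x(g). -/

import Mathlib

open scoped Classical

/-- `a` sees `b` on the terrain `f`. -/
def Sees (f : ℝ → ℝ) (a b : ℝ) : Prop :=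
  ∀ t ∈ Set.Icc (0:ℝ) 1, f ((1 - t) * a + t * b) ≤ (1 - t) * f a + t * f b

/-!
A point receives at least half of its fractional coverage from guards on its left or at least half
from guards on its right, since no guard coincides with a point. Doubling `x` therefore gives a
fractional solution of two one-sided problems, and rounding each of them without loss yields total
cost at most `2 + 2 = 4` times that of `x`.

One-sided problems can be rounded without loss because of the order claim: if `a < b < c < d`,
`a` sees `c` and `b` sees `d`, then `a` sees `d`. Hence, among the guards to the left of `p` that
see `p`, the further left a guard is, the more points beyond `p` it sees. When these sets of later
points are nested, a primal-dual argument applies: pay for the first point `p` by lowering the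
weights of all guards seeing `p` by their minimum `δ`, solve the rest recursively, and keep only
one guard seeing `p`, so that restoring the weights costs `δ` just once.
-/

namespace Sees

variable {f : ℝ → ℝ} {a b c d z : ℝ}

lemma symm (h : Sees f a b) : Sees f b a := by
  intro t ht
  have := h (1 - t) (Set.Icc.one_sub_mem ht)
  rwa [sub_sub_cancel, add_comm (t * a), add_comm (t * f a)] at this

lemma le_max (h : Sees f a b) (hz : z ∈ segment ℝ a b) : f z ≤ max (f a) (f b) := by
  rw [segment_eq_image] at hz
  obtain ⟨t, ht, rfl⟩ := hz
  exact (h t ht).trans (Convex.combo_le_max _ _ (sub_nonneg.2 ht.2) ht.1 (sub_add_cancel 1 t))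

lemma lt_of_lt (h : Sees f a b) (hz : z ∈ openSegment ℝ a b) (haz : f a < f z) : f z < f b := by
  rw [openSegment_eq_image] at hz
  obtain ⟨t, ht, hz⟩ := hz
  by_contra! hbz
  refine lt_irrefl (f z) ?_
  calc f z ≤ (1 - t) * f a + t * f b := hz ▸ h t (Set.Ioo_subset_Icc_self ht)
    _ < (1 - t) * f z + t * f z :=
      add_lt_add_of_lt_of_le (mul_lt_mul_of_pos_left haz (sub_pos.2 ht.2))
        (mul_le_mul_of_nonneg_left hbz ht.1.le)
    _ = f z := by ring

lemma sub_mul_iff (m : ℝ) : Sees (fun z => f z - m * z) a b ↔ Sees f a b := by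
  refine forall₂_congr fun t _ => ?_
  rw [← sub_nonneg, ← sub_nonneg (b := f _)]
  ring_nf

lemma of_crossing_of_eq (hab : a < b) (hbc : b < c) (hcd : c < d) (hac : Sees f a c)
    (hbd : Sees f b d) (had : f a = f d) : Sees f a d := by
  have hb_mem : b ∈ openSegment ℝ a c := by
    rw [openSegment_eq_Ioo (hab.trans hbc)]
    exact ⟨hab, hbc⟩
  have hc_mem : c ∈ openSegment ℝ d b := by
    rw [openSegment_symm, openSegment_eq_Ioo (hbc.trans hcd)]
    exact ⟨hbc, hcd⟩
  have hbc_lt : f a < f b → f b < f c := hac.lt_of_lt hb_mem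
  have hcb_lt : f a < f c → f c < f b := had ▸ hbd.symm.lt_of_lt hc_mem
  have hb : f b ≤ f a := not_lt.1 fun hlt =>
    (hbc_lt hlt).asymm (hcb_lt (hlt.trans (hbc_lt hlt)))
  have hc : f c ≤ f a := not_lt.1 fun hlt =>
    (hcb_lt hlt).asymm (hbc_lt (hlt.trans (hcb_lt hlt)))
  have hle : ∀ z ∈ segment ℝ a d, f z ≤ f a := by
    intro z hz
    rw [segment_eq_Icc (by linarith)] at hz
    rcases le_total z c with hzc | hcz
    · have hz_mem : z ∈ segment ℝ a c := by
        rw [segment_eq_Icc (by linarith)]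
        exact ⟨hz.1, hzc⟩
      exact (hac.le_max hz_mem).trans (max_le le_rfl hc)
    · have hz_mem : z ∈ segment ℝ b d := by
        rw [segment_eq_Icc (by linarith)]
        exact ⟨hbc.le.trans hcz, hz.2⟩
      exact (hbd.le_max hz_mem).trans (max_le hb had.ge)
  intro t ht
  calc f ((1 - t) * a + t * d) ≤ f a := hle _ (by rw [segment_eq_image]; exact ⟨t, ht, rfl⟩)
    _ = (1 - t) * f a + t * f d := by rw [← had]; ring

lemma of_crossing (hab : a < b) (hbc : b < c) (hcd : c < d) (hac : Sees f a c)
    (hbd : Sees f b d) : Sees f a d := by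
  -- Visibility is invariant under shearing, so the chord from `a` to `d` may be made horizontal.
  set m := (f d - f a) / (d - a) with hm
  have hne : d - a ≠ 0 := by linarith
  rw [← sub_mul_iff m] at hac hbd ⊢
  refine of_crossing_of_eq hab hbc hcd hac hbd ?_
  rw [hm]
  field_simp
  ring

end Sees

section Covering

variable {α β γ 𝕜 : Type*} {r r₁ r₂ : α → β → Prop} {G A : Finset α} {N N' : Finset β}

/-- `A` is a feasible integral solution of the covering problem with incidence relation `r`:
every `p ∈ N` is covered by a member of `A`. -/
def IsCover (r : α → β → Prop) (A : Finset α) (N : Finset β) : Prop :=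
  ∀ p ∈ N, ∃ g ∈ A, r g p

/-- `x` is a feasible solution of the linear relaxation of covering `N` by members of `G`. -/
structure IsFractionalCover [Semiring 𝕜] [LE 𝕜] (r : α → β → Prop) (G : Finset α) (N : Finset β)
    (x : α → 𝕜) : Prop where
  nonneg : ∀ g ∈ G, 0 ≤ x g
  one_le_sum : ∀ p ∈ N, 1 ≤ ∑ g ∈ G with r g p, x g

/-- The elements covered by `g` that come no earlier than `p`, in the order given by `rank`. -/
def reach [LE γ] (rank : β → γ) (r : α → β → Prop) (p : β) (g : α) : Set β :=
  {q | rank p ≤ rank q ∧ r g q}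

/-- Members covering a common element `p` have nested reaches beyond `p`. This is the condition on
the incidence relation that makes the covering problem integral; the order on `β` is given by a
function `rank` so that it can be reversed. -/
def NestedReach [LE γ] (rank : β → γ) (r : α → β → Prop) : Prop :=
  ∀ ⦃p g₁ g₂⦄, r g₁ p → r g₂ p →
    reach rank r p g₁ ⊆ reach rank r p g₂ ∨ reach rank r p g₂ ⊆ reach rank r p g₁

/-- The weights after every member covering `p` has been discounted by `δ`: one step of the
primal-dual algorithm, with `δ` the dual value of the constraint at `p`. -/
noncomputable def discount [Sub 𝕜] [Zero 𝕜] (r : α → β → Prop) (p : β) (δ : 𝕜) (w : α → 𝕜)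
    (g : α) : 𝕜 :=
  w g - if r g p then δ else 0

lemma NestedReach.of_monotoneOn [LinearOrder α] [LE γ] {rank : β → γ}
    (h : ∀ p, MonotoneOn (reach rank r p) {g | r g p}) : NestedReach rank r :=
  fun p g₁ g₂ h₁ h₂ => (le_total g₁ g₂).imp (h p h₁ h₂) (h p h₂ h₁)

lemma NestedReach.of_antitoneOn [LinearOrder α] [LE γ] {rank : β → γ}
    (h : ∀ p, AntitoneOn (reach rank r p) {g | r g p}) : NestedReach rank r :=
  fun p g₁ g₂ h₁ h₂ => (le_total g₂ g₁).imp (h p h₂ h₁) (h p h₁ h₂)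

lemma NestedReach.exists_forall_reach_subset [LE γ] {rank : β → γ} (h : NestedReach rank r)
    {p : β} (hA : A.Nonempty) (hp : ∀ g ∈ A, r g p) :
    ∃ k ∈ A, ∀ g ∈ A, reach rank r p g ⊆ reach rank r p k := by
  obtain ⟨k, hk, hmax⟩ := A.exists_maximalFor (reach rank r p) hA
  exact ⟨k, hk, fun g hg => (h (hp g hg) (hp k hk)).elim id (hmax hg)⟩

lemma NestedReach.exists_subset_card_le_one [LE γ] {rank : β → γ} (h : NestedReach rank r)
    {p : β} (hpN : p ∈ N) (hmin : ∀ q ∈ N, rank p ≤ rank q) (hA : IsCover r A N) :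
    ∃ B ⊆ A, IsCover r B N ∧ (B.filter (r · p)).card ≤ 1 := by
  obtain ⟨g₀, hg₀A, hg₀p⟩ := hA p hpN
  obtain ⟨k, hk, hmax⟩ := h.exists_forall_reach_subset (A := A.filter (r · p)) (p := p)
    ⟨g₀, Finset.mem_filter.2 ⟨hg₀A, hg₀p⟩⟩ fun g hg => (Finset.mem_filter.1 hg).2
  refine ⟨A.filter fun g => r g p → g = k, Finset.filter_subset _ _, fun q hq => ?_, ?_⟩
  · obtain ⟨g, hgA, hgq⟩ := hA q hq
    by_cases hgp : r g p
    · have hkq : r k q := (hmax g (Finset.mem_filter.2 ⟨hgA, hgp⟩) ⟨hmin q hq, hgq⟩).2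
      exact ⟨k, Finset.mem_filter.2 ⟨(Finset.mem_filter.1 hk).1, fun _ => rfl⟩, hkq⟩
    · exact ⟨g, Finset.mem_filter.2 ⟨hgA, fun h => absurd h hgp⟩, hgq⟩
  · suffices hsub : (A.filter fun g => r g p → g = k).filter (r · p) ⊆ {k} by
      simpa using Finset.card_le_card hsub
    intro g hg
    simp only [Finset.mem_filter] at hg
    exact Finset.mem_singleton.2 (hg.1.2 hg.2)

lemma IsCover.union_or (h₁ : IsCover r₁ A N) {B : Finset α} (h₂ : IsCover r₂ B N') :
    IsCover (fun g p => r₁ g p ∨ r₂ g p) (A ∪ B) (N ∪ N') := by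
  grind [IsCover]

variable [CommRing 𝕜]

lemma sum_mul_eq_sum_discount_mul_add (S : Finset α) (p : β) (δ : 𝕜) (w y : α → 𝕜) :
    ∑ g ∈ S, w g * y g =
      ∑ g ∈ S, discount r p δ w g * y g + δ * ∑ g ∈ S with r g p, y g := by
  rw [Finset.sum_filter, Finset.mul_sum, ← Finset.sum_add_distrib]
  refine Finset.sum_congr rfl fun g _ => ?_
  rw [discount]
  split_ifs <;> ring

variable [LinearOrder 𝕜] [IsStrictOrderedRing 𝕜] {w x : α → 𝕜}

lemma discount_nonneg {p : β} {δ : 𝕜} {g : α} (hw : 0 ≤ w g) (hδ : r g p → δ ≤ w g) :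
    0 ≤ discount r p δ w g := by
  rw [discount, sub_nonneg]
  split_ifs with hgp
  exacts [hδ hgp, hw]

namespace IsFractionalCover

lemma filter_nonempty (hx : IsFractionalCover r G N x) {p : β} (hp : p ∈ N) :
    (G.filter (r · p)).Nonempty := by
  by_contra hempty
  have := hx.one_le_sum p hp
  rw [Finset.not_nonempty_iff_eq_empty.1 hempty, Finset.sum_empty] at this
  exact this.not_gt one_pos

lemma mono (hx : IsFractionalCover r₁ G N x) (hN : N' ⊆ N)
    (hr : ∀ g ∈ G, ∀ p ∈ N', r₁ g p → r₂ g p) : IsFractionalCover r₂ G N' x where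
  nonneg := hx.nonneg
  one_le_sum p hp := (hx.one_le_sum p (hN hp)).trans <|
    Finset.sum_le_sum_of_subset_of_nonneg
      (Finset.monotone_filter_right G fun g hg => hr g hg p hp)
      fun g hg _ => hx.nonneg g (Finset.mem_filter.1 hg).1

theorem exists_isCover_sum_le [LinearOrder γ] {rank : β → γ} (h : NestedReach rank r)
    (hw : ∀ g ∈ G, 0 ≤ w g) (hx : IsFractionalCover r G N x) :
    ∃ A ⊆ G, IsCover r A N ∧ ∑ g ∈ A, w g ≤ ∑ g ∈ G, w g * x g := by
  induction N using Finset.induction_on_min_value rank generalizing w with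
  | empty =>
    exact ⟨∅, by simp, by simp [IsCover],
      by simpa using Finset.sum_nonneg fun g hg => mul_nonneg (hw g hg) (hx.nonneg g hg)⟩
  | insert p s _ hps ih =>
    obtain ⟨m, hm, hmin⟩ :=
      Finset.exists_min_image _ w (hx.filter_nonempty (Finset.mem_insert_self p s))
    obtain ⟨hmG, hmp⟩ := Finset.mem_filter.1 hm
    set v := discount r p (w m) w with hv
    have hv_nonneg : ∀ g ∈ G, 0 ≤ v g := fun g hg =>
      discount_nonneg (hw g hg) fun hgp => hmin g (Finset.mem_filter.2 ⟨hg, hgp⟩)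
    have hvm : v m = 0 := by simp [hv, discount, hmp]
    obtain ⟨A, hAG, hA, hAv⟩ :=
      ih hv_nonneg (hx.mono (Finset.subset_insert p s) fun _ _ _ _ => id)
    have hmA : IsCover r (insert m A) (insert p s) := by grind [IsCover]
    obtain ⟨B, hBA, hB, hBp⟩ := h.exists_subset_card_le_one
      (Finset.mem_insert_self p s) (by simpa using hps) hmA
    have hmAG : insert m A ⊆ G := Finset.insert_subset hmG hAG
    refine ⟨B, hBA.trans hmAG, hB, ?_⟩
    calc ∑ g ∈ B, w g
        = ∑ g ∈ B, v g + w m * (B.filter (r · p)).card := by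
          simpa using sum_mul_eq_sum_discount_mul_add (r := r) B p (w m) w 1
      _ ≤ ∑ g ∈ insert m A, v g + w m * 1 := by
          gcongr
          · exact fun g hg _ => hv_nonneg g (hmAG hg)
          · exact hw m hmG
          · exact_mod_cast hBp
      _ = ∑ g ∈ A, v g + w m * 1 := by rw [Finset.sum_insert_zero hvm]
      _ ≤ ∑ g ∈ G, v g * x g + w m * ∑ g ∈ G with r g p, x g := by
          gcongr
          · exact hw m hmG
          · exact hx.one_le_sum p (Finset.mem_insert_self p s)
      _ = ∑ g ∈ G, w g * x g := (sum_mul_eq_sum_discount_mul_add G p (w m) w x).symm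

lemma exists_split_two_mul (hx : IsFractionalCover (fun g p => r₁ g p ∨ r₂ g p) G N x) :
    ∃ N₁ N₂, N₁ ∪ N₂ = N ∧ IsFractionalCover r₁ G N₁ (fun g => 2 * x g) ∧
      IsFractionalCover r₂ G N₂ (fun g => 2 * x g) := by
  have hnonneg : ∀ g ∈ G, 0 ≤ 2 * x g := fun g hg => mul_nonneg zero_le_two (hx.nonneg g hg)
  refine ⟨N.filter fun p => 1 ≤ ∑ g ∈ G with r₁ g p, 2 * x g,
    N.filter fun p => 1 ≤ ∑ g ∈ G with r₂ g p, 2 * x g, ?_,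
    ⟨hnonneg, fun p hp => (Finset.mem_filter.1 hp).2⟩,
    ⟨hnonneg, fun p hp => (Finset.mem_filter.1 hp).2⟩⟩
  rw [← Finset.filter_or, Finset.filter_eq_self]
  intro p hp
  have hsum : ∑ g ∈ G with r₁ g p ∨ r₂ g p, x g ≤
      ∑ g ∈ G with r₁ g p, x g + ∑ g ∈ G with r₂ g p, x g := by
    rw [Finset.filter_or, ← Finset.sum_union_inter, le_add_iff_nonneg_right]
    exact Finset.sum_nonneg fun g hg =>
      hx.nonneg g (Finset.mem_filter.1 (Finset.mem_inter.1 hg).1).1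
  have hone : 1 ≤ ∑ g ∈ G with r₁ g p ∨ r₂ g p, x g := by
    convert hx.one_le_sum p hp
  simp only [← Finset.mul_sum]
  by_contra! ⟨hlt₁, hlt₂⟩
  linarith

theorem exists_isCover_sum_le_four_mul {γ₁ γ₂ : Type*} [LinearOrder γ₁] [LinearOrder γ₂]
    {rank₁ : β → γ₁} {rank₂ : β → γ₂} (h₁ : NestedReach rank₁ r₁) (h₂ : NestedReach rank₂ r₂)
    (hw : ∀ g ∈ G, 0 ≤ w g) (hx : IsFractionalCover (fun g p => r₁ g p ∨ r₂ g p) G N x) :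
    ∃ A ⊆ G, IsCover (fun g p => r₁ g p ∨ r₂ g p) A N ∧
      ∑ g ∈ A, w g ≤ 4 * ∑ g ∈ G, w g * x g := by
  obtain ⟨N₁, N₂, rfl, hx₁, hx₂⟩ := hx.exists_split_two_mul
  obtain ⟨A₁, hA₁G, hA₁, hA₁w⟩ := hx₁.exists_isCover_sum_le h₁ hw
  obtain ⟨A₂, hA₂G, hA₂, hA₂w⟩ := hx₂.exists_isCover_sum_le h₂ hw
  refine ⟨A₁ ∪ A₂, Finset.union_subset hA₁G hA₂G, hA₁.union_or hA₂, ?_⟩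
  have hinter : 0 ≤ ∑ g ∈ A₁ ∩ A₂, w g :=
    Finset.sum_nonneg fun g hg => hw g (hA₁G (Finset.mem_inter.1 hg).1)
  simp only [mul_left_comm _ (2 : 𝕜), ← Finset.mul_sum] at hA₁w hA₂w
  calc ∑ g ∈ A₁ ∪ A₂, w g
      ≤ ∑ g ∈ A₁ ∪ A₂, w g + ∑ g ∈ A₁ ∩ A₂, w g := le_add_of_nonneg_right hinter
    _ = ∑ g ∈ A₁, w g + ∑ g ∈ A₂, w g := Finset.sum_union_inter
    _ ≤ 4 * ∑ g ∈ G, w g * x g := by linarith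

end IsFractionalCover

end Covering

section Terrain

/-- The guard `g` lies to the left of the point `p` and sees it. -/
def SeesFromLeft (f : ℝ → ℝ) (g p : ℝ) : Prop :=
  g < p ∧ Sees f g p

/-- The guard `g` lies to the right of the point `p` and sees it. -/
def SeesFromRight (f : ℝ → ℝ) (g p : ℝ) : Prop :=
  p < g ∧ Sees f g p

lemma Sees.seesFromLeft_or_seesFromRight {f : ℝ → ℝ} {g p : ℝ} (h : Sees f g p) (hne : g ≠ p) :
    SeesFromLeft f g p ∨ SeesFromRight f g p :=
  hne.lt_or_gt.imp (⟨·, h⟩) (⟨·, h⟩)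

lemma nestedReach_seesFromLeft (f : ℝ → ℝ) : NestedReach id (SeesFromLeft f) := by
  refine .of_antitoneOn fun p g₁ h₁ g₂ h₂ hg q ⟨hpq, hq⟩ => ⟨hpq, hg.trans_lt hq.1, ?_⟩
  rcases hg.eq_or_lt with rfl | hg
  · exact hq.2
  rcases hpq.eq_or_lt with rfl | hpq
  · exact h₁.2
  · exact .of_crossing hg h₂.1 hpq h₁.2 hq.2

lemma nestedReach_seesFromRight (f : ℝ → ℝ) :
    NestedReach OrderDual.toDual (SeesFromRight f) := by
  refine .of_monotoneOn fun p g₁ h₁ g₂ h₂ hg q ⟨hqp, hq⟩ => ⟨hqp, hq.1.trans_le hg, ?_⟩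
  rw [OrderDual.toDual_le_toDual] at hqp
  rcases hg.eq_or_lt with rfl | hg
  · exact hq.2
  rcases hqp.eq_or_lt with rfl | hqp
  · exact h₂.2
  · exact (Sees.of_crossing hqp h₁.1 hg hq.2.symm h₂.2.symm).symm

end Terrain

/-- LP-rounding gives a factor-4 guarantee for the discrete guarding problem
when the guard and point sets are disjoint. -/
theorem discrete_guarding_four_approx (f : ℝ → ℝ) (G N : Finset ℝ)
    (w x : ℝ → ℝ)
    (hGN : G ∩ N = ∅)
    (hw : ∀ g ∈ G, 0 ≤ w g) (hx : ∀ g ∈ G, 0 ≤ x g)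
    (hcov : ∀ p ∈ N, 1 ≤ ∑ g ∈ G, if Sees f g p then x g else 0) :
    ∃ A ⊆ G, (∀ p ∈ N, ∃ g ∈ A, Sees f g p) ∧
      ∑ g ∈ A, w g ≤ 4 * ∑ g ∈ G, w g * x g := by
  have hfrac : IsFractionalCover (Sees f) G N x :=
    ⟨hx, by simpa only [Finset.sum_filter] using hcov⟩
  have hne : ∀ g ∈ G, ∀ p ∈ N, g ≠ p :=
    Finset.disjoint_iff_ne.1 (Finset.disjoint_iff_inter_eq_empty.2 hGN)
  have hsides : IsFractionalCover (fun g p => SeesFromLeft f g p ∨ SeesFromRight f g p) G N x :=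
    hfrac.mono subset_rfl fun g hg p hp h => h.seesFromLeft_or_seesFromRight (hne g hg p hp)
  obtain ⟨A, hAG, hA, hAw⟩ := hsides.exists_isCover_sum_le_four_mul
    (nestedReach_seesFromLeft f) (nestedReach_seesFromRight f) hw
  refine ⟨A, hAG, fun p hp => ?_, hAw⟩
  obtain ⟨g, hg, hgp⟩ := hA p hp
  exact ⟨g, hg, hgp.elim And.right And.right⟩
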